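/- arXiv:2408.06573 — 5 statements merged into one kernel-verified Lean document; each statement's English description precedes it below -/
import Mathlib

section
/- Let A be a complex unital Banach algebra and let x ∈ A be such that the spectrum σ(x) has exactly n connected components (i.e., the set of connected components of σ(x) is finite with cardinality n). Then there exists ε > 0 such that every y ∈ A with ‖x − y‖ < ε has the property that σ(y) has at least n connected components (i.e., there exist n pairwise disjoint open subsets of ℂ, each meeting σ(y), whose union contains σ(y)). -/
/-!
An isolated part of `σ(x)` cannot disappear under a small perturbation. Let `V` be a bounded set
whose frontier misses `σ(x)`. For `y` near `x` the resolvents are bounded on `∂V` by a common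
constant `M`. If such a `y` had no spectrum in `V`, its resolvent would be holomorphic on `V`, hence
bounded by `M` there by the maximum modulus principle. At a point `z ∈ σ(x) ∩ V` the element `z - y`
would then have an inverse of norm at most `M`, which makes `z - x` invertible as soon as
`M ‖x - y‖ < 1`. No holomorphic functional calculus is needed.

That the perturbed spectrum does not leave a neighbourhood of `σ(x)` is upper hemicontinuity.
-/

open Bornology Filter Function Set Topology

section OpenSeparation

variable {X ι : Type*} [TopologicalSpace X]

/-- `U` splits `S` into parts indexed by `ι`: the `U i` are disjoint open sets of the ambient space
which cover `S`, and each of them meets `S`. This witnesses that `S` has at least as many connected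
components as `ι` has elements. -/
structure IsOpenSeparation (U : ι → Set X) (S : Set X) : Prop where
  isOpen (i : ι) : IsOpen (U i)
  pairwise_disjoint : Pairwise (Disjoint on U)
  inter_nonempty (i : ι) : (S ∩ U i).Nonempty
  subset_iUnion : S ⊆ ⋃ i, U i

lemma IsOpenSeparation.disjoint_frontier {U : ι → Set X} {S : Set X} (h : IsOpenSeparation U S)
    (i : ι) : Disjoint (frontier (U i)) S := by
  refine disjoint_left.2 fun z hz hzS => ?_
  rw [(h.isOpen i).frontier_eq] at hz
  obtain ⟨j, hj⟩ := mem_iUnion.1 (h.subset_iUnion hzS)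
  obtain rfl | hij := eq_or_ne i j
  · exact hz.2 hj
  · exact ((h.pairwise_disjoint hij).closure_left (h.isOpen j)).notMem_of_mem_left hz.1 hj

lemma exists_isOpen_superset_pairwise_disjoint [T2Space X] [Finite ι] {K : ι → Set X}
    (hK : ∀ i, IsCompact (K i)) (hdisj : Pairwise (Disjoint on K)) :
    ∃ U : ι → Set X, (∀ i, IsOpen (U i) ∧ K i ⊆ U i) ∧ Pairwise (Disjoint on U) := by
  have hnhds : Pairwise (Disjoint on fun i => 𝓝ˢ (K i)) := fun i j hij =>
    separatedNhds_iff_disjoint.1 (.of_isCompact_isCompact (hK i) (hK j) (hdisj hij))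
  exact hnhds.exists_mem_filter_basis_of_disjoint fun i => hasBasis_nhdsSet (K i)

lemma exists_isOpenSeparation_of_isLocallyConstant [T2Space X] [Finite ι] {S : Set X}
    (hS : IsCompact S) {f : S → ι} (hf : IsLocallyConstant f) (hsurj : Surjective f) :
    ∃ U : ι → Set X, IsOpenSeparation U S := by
  have : CompactSpace S := isCompact_iff_compactSpace.1 hS
  let K : ι → Set X := fun i => (↑) '' (f ⁻¹' {i})
  have hKcompact (i : ι) : IsCompact (K i) :=
    (hf.isClosed_fiber i).isCompact.image continuous_subtype_val
  have hKdisj : Pairwise (Disjoint on K) := fun i j hij =>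
    (disjoint_image_iff Subtype.val_injective).2 ((disjoint_singleton.2 hij).preimage f)
  obtain ⟨U, hU, hUdisj⟩ := exists_isOpen_superset_pairwise_disjoint hKcompact hKdisj
  have hmem (s : S) : (s : X) ∈ U (f s) := (hU (f s)).2 (mem_image_of_mem _ rfl)
  refine ⟨U, fun i => (hU i).1, hUdisj, fun i => ?_, fun z hz => ?_⟩
  · obtain ⟨s, rfl⟩ := hsurj i
    exact ⟨s, s.2, hmem s⟩
  · exact mem_iUnion.2 ⟨_, hmem ⟨z, hz⟩⟩

end OpenSeparation

section Resolvent

variable {𝕜 A : Type*} [NormedField 𝕜] [NormedRing A] [NormedAlgebra 𝕜 A] [HasSummableGeomSeries A]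

lemma isOpen_setOf_mem_resolventSet : IsOpen {p : A × 𝕜 | p.2 ∈ resolventSet 𝕜 p.1} := by
  have hcont : Continuous fun p : A × 𝕜 => algebraMap 𝕜 A p.2 - p.1 := by fun_prop
  exact Units.isOpen.preimage hcont

lemma continuousAt_uncurry_resolvent {x : A} {z : 𝕜} (hz : z ∈ resolventSet 𝕜 x) :
    ContinuousAt (fun p : A × 𝕜 => resolvent p.1 p.2) (x, z) := by
  have hcont : Continuous fun p : A × 𝕜 => algebraMap 𝕜 A p.2 - p.1 := by fun_prop
  obtain ⟨u, hu⟩ : IsUnit (algebraMap 𝕜 A z - x) := hz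
  exact ContinuousAt.comp_of_eq (NormedRing.inverse_continuousAt u) hcont.continuousAt hu.symm

lemma exists_eventually_norm_resolvent_le (x : A) {K : Set 𝕜} (hK : IsCompact K)
    (hKx : K ⊆ resolventSet 𝕜 x) :
    ∃ M : ℝ, ∀ᶠ y in 𝓝 x, ∀ z ∈ K, z ∈ resolventSet 𝕜 y ∧ ‖resolvent y z‖ ≤ M := by
  have hcont : ContinuousOn (resolvent x) K := fun z hz =>
    (ContinuousAt.comp (f := fun z => (x, z)) (continuousAt_uncurry_resolvent (hKx hz))
      (by fun_prop)).continuousWithinAt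
  obtain ⟨C, hC⟩ := hK.exists_bound_of_continuousOn hcont
  refine ⟨C + 1, hK.eventually_forall_of_forall_eventually fun z hz => ?_⟩
  have hlt : ‖resolvent x z‖ < C + 1 := (hC z hz).trans_lt (lt_add_one C)
  exact (isOpen_setOf_mem_resolventSet.eventually_mem (hKx hz)).and
    (((continuousAt_uncurry_resolvent (hKx hz)).norm.eventually_lt_const hlt).mono
      fun _ => le_of_lt)

lemma mem_resolventSet_of_norm_resolvent_mul_lt_one {x y : A} {z : 𝕜} (hz : z ∈ resolventSet 𝕜 y)
    (h : ‖resolvent y z‖ * ‖x - y‖ < 1) : z ∈ resolventSet 𝕜 x := by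
  have hunit : IsUnit (1 - resolvent y z * (x - y)) :=
    isUnit_one_sub_of_norm_lt_one ((norm_mul_le _ _).trans_lt h)
  have hfactor : algebraMap 𝕜 A z - x =
      (algebraMap 𝕜 A z - y) * (1 - resolvent y z * (x - y)) := by
    rw [mul_sub, ← mul_assoc, resolvent, Ring.mul_inverse_cancel _ hz]
    noncomm_ring
  rw [spectrum.mem_resolventSet_iff, hfactor]
  exact IsUnit.mul hz hunit

end Resolvent

lemma eventually_spectrum_subset {𝕜 A : Type*} [NormedField 𝕜] [ProperSpace 𝕜] [NormedRing A]
    [NormedAlgebra 𝕜 A] [CompleteSpace A] (x : A) {W : Set 𝕜} (hW : IsOpen W)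
    (hxW : spectrum 𝕜 x ⊆ W) : ∀ᶠ y in 𝓝 x, spectrum 𝕜 y ⊆ W :=
  (upperHemicontinuous_spectrum 𝕜 A x W (hW.mem_nhdsSet.2 hxW)).mono
    fun _ => subset_of_mem_nhdsSet

section SpectrumPersistence

variable {A : Type*} [NormedRing A] [NormedAlgebra ℂ A] [CompleteSpace A]

lemma norm_resolvent_le_of_forall_mem_frontier {y : A} {V : Set ℂ} (hV : IsBounded V)
    (hVy : closure V ⊆ resolventSet ℂ y) {M : ℝ} (hM : ∀ w ∈ frontier V, ‖resolvent y w‖ ≤ M)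
    {z : ℂ} (hz : z ∈ closure V) : ‖resolvent y z‖ ≤ M := by
  have hdiff : DifferentiableOn ℂ (resolvent y) (closure V) := fun w hw =>
    (spectrum.hasDerivAt_resolvent_const_left (hVy hw)).differentiableAt.differentiableWithinAt
  exact Complex.norm_le_of_forall_mem_frontier_norm_le hV hdiff.diffContOnCl hM hz

lemma eventually_spectrum_inter_nonempty_of_isBounded (x : A) {V : Set ℂ} (hV : IsBounded V)
    (hfr : Disjoint (frontier V) (spectrum ℂ x)) (hne : (spectrum ℂ x ∩ V).Nonempty) :
    ∀ᶠ y in 𝓝 x, (spectrum ℂ y ∩ V).Nonempty := by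
  obtain ⟨z, hzx, hzV⟩ := hne
  have hcompact : IsCompact (frontier V) :=
    Metric.isCompact_of_isClosed_isBounded isClosed_frontier
      (hV.closure.subset frontier_subset_closure)
  obtain ⟨M, hM⟩ := exists_eventually_norm_resolvent_le x hcompact fun w hw =>
    spectrum.notMem_iff.1 (hfr.notMem_of_mem_left hw)
  have hsmall : ∀ᶠ y in 𝓝 x, M * ‖x - y‖ < 1 :=
    (Continuous.continuousAt (f := fun y => M * ‖x - y‖) (by fun_prop)).eventually_lt_const
      (by simp)
  filter_upwards [hM, hsmall] with y hyM hy
  by_contra hempty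
  have hVy : closure V ⊆ resolventSet ℂ y := by
    rw [closure_eq_self_union_frontier]
    refine union_subset (fun w hw => ?_) fun w hw => (hyM w hw).1
    exact spectrum.notMem_iff.1 fun hwy => hempty ⟨w, hwy, hw⟩
  have hz : z ∈ closure V := subset_closure hzV
  have hbound : ‖resolvent y z‖ ≤ M :=
    norm_resolvent_le_of_forall_mem_frontier hV hVy (fun w hw => (hyM w hw).2) hz
  have hzy : ‖resolvent y z‖ * ‖x - y‖ < 1 :=
    (mul_le_mul_of_nonneg_right hbound (norm_nonneg _)).trans_lt hy
  exact hzx (mem_resolventSet_of_norm_resolvent_mul_lt_one (hVy hz) hzy)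

lemma eventually_spectrum_inter_nonempty (x : A) {V : Set ℂ}
    (hfr : Disjoint (frontier V) (spectrum ℂ x)) (hne : (spectrum ℂ x ∩ V).Nonempty) :
    ∀ᶠ y in 𝓝 x, (spectrum ℂ y ∩ V).Nonempty := by
  obtain ⟨R, hR⟩ := (spectrum.isBounded (𝕜 := ℂ) x).subset_ball 0
  have hball : Disjoint (frontier (Metric.ball 0 R)) (spectrum ℂ x) :=
    (disjoint_frontier_iff_isOpen.2 Metric.isOpen_ball).mono_right hR
  have hfr' : Disjoint (frontier (V ∩ Metric.ball 0 R)) (spectrum ℂ x) :=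
    (hfr.union_left hball).mono_left <| (frontier_inter_subset _ _).trans
      (union_subset_union inter_subset_left inter_subset_right)
  have hne' : (spectrum ℂ x ∩ (V ∩ Metric.ball 0 R)).Nonempty :=
    hne.mono fun z hz => ⟨hz.1, hz.2, hR hz.1⟩
  exact (eventually_spectrum_inter_nonempty_of_isBounded x
    (Metric.isBounded_ball.subset inter_subset_right) hfr' hne').mono
      fun y hy => hy.mono (inter_subset_inter_right _ inter_subset_left)

lemma IsOpenSeparation.eventually_spectrum {ι : Type*} [Finite ι] {x : A} {U : ι → Set ℂ}
    (h : IsOpenSeparation U (spectrum ℂ x)) :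
    ∀ᶠ y in 𝓝 x, IsOpenSeparation U (spectrum ℂ y) := by
  have hmeet : ∀ᶠ y in 𝓝 x, ∀ i, (spectrum ℂ y ∩ U i).Nonempty := eventually_all.2 fun i =>
    eventually_spectrum_inter_nonempty x (h.disjoint_frontier i) (h.inter_nonempty i)
  have hcover : ∀ᶠ y in 𝓝 x, spectrum ℂ y ⊆ ⋃ i, U i :=
    eventually_spectrum_subset x (isOpen_iUnion h.isOpen) h.subset_iUnion
  filter_upwards [hmeet, hcover] with y hmeet_y hcover_y
  exact ⟨h.isOpen, h.pairwise_disjoint, hmeet_y, hcover_y⟩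

/-- The fibres of `f` partition `σ(x)` into finitely many clopen parts, each of which may consist of
infinitely many components. -/
theorem spectrum_components_lower_semicontinuous_general {ι : Type*} (x : A)
    {f : spectrum ℂ x → ι} (hf : IsLocallyConstant f) (hsurj : Surjective f) :
    ∃ U : ι → Set ℂ, ∃ ε > 0, ∀ y : A, ‖x - y‖ < ε → IsOpenSeparation U (spectrum ℂ y) := by
  have : Finite ι := finite_univ_iff.1 (hsurj.range_eq ▸ hf.range_finite)
  obtain ⟨U, hU⟩ := exists_isOpenSeparation_of_isLocallyConstant (spectrum.isCompact x) hf hsurj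
  obtain ⟨ε, hε, h⟩ := Metric.eventually_nhds_iff.1 hU.eventually_spectrum
  exact ⟨U, ε, hε, fun y hy => h (by rwa [dist_comm, dist_eq_norm])⟩

end SpectrumPersistence

/-- If the spectrum of an element `x` of a complex unital Banach algebra has exactly `n`
connected components, then every `y` close enough to `x` has spectrum with at least `n`
connected components. -/
theorem spectrum_components_lower_semicontinuous
    {A : Type*} [NormedRing A] [NormedAlgebra ℂ A] [CompleteSpace A]
    (x : A) (n : ℕ)
    (hfin : Finite (ConnectedComponents ↥(spectrum ℂ x)))
    (hn : Nat.card (ConnectedComponents ↥(spectrum ℂ x)) = n) :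
    ∃ ε > 0, ∀ y : A, ‖x - y‖ < ε →
      ∃ U : Fin n → Set ℂ, (∀ i, IsOpen (U i)) ∧
        Pairwise (Function.onFun Disjoint U) ∧
        (∀ i, (spectrum ℂ y ∩ U i).Nonempty) ∧
        spectrum ℂ y ⊆ ⋃ i, U i := by
  let e : ConnectedComponents (spectrum ℂ x) ≃ Fin n := Finite.equivFinOfCardEq hn
  have hlc : IsLocallyConstant ((↑) : spectrum ℂ x → ConnectedComponents (spectrum ℂ x)) :=
    (IsLocallyConstant.iff_continuous _).2 ConnectedComponents.continuous_coe
  obtain ⟨U, ε, hε, hU⟩ := spectrum_components_lower_semicontinuous_general x (hlc.comp e)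
    (e.surjective.comp ConnectedComponents.surjective_coe)
  exact ⟨ε, hε, fun y hy => ⟨U, (hU y hy).isOpen, (hU y hy).pairwise_disjoint,
    (hU y hy).inter_nonempty, (hU y hy).subset_iUnion⟩⟩
end

section
/- Let μ be a Borel probability measure on ℝ and let G_μ(z) = ∫_ℝ (z − t)⁻¹ dμ(t) for z ∈ ℍ. Then |λ|² · ∫_ℝ |(λ − t)⁻¹ − G_μ(λ)|² dμ(t) → 0 as λ → ∞ nontangentially; that is, for every C > 0 and ε > 0 there exists R > 0 such that |λ|² · ∫_ℝ |(λ − t)⁻¹ − G_μ(λ)|² dμ(t) < ε whenever λ ∈ ℍ, |λ| > R, and |Re λ| ≤ C·Im λ. -/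
open MeasureTheory

/-!
Put `F_l(t) = l * (l - t)⁻¹`, so that `∫ F_l dμ = l * G_μ(l)` and the quantity in question is the
variance of `F_l`. In the sector `|Re l| ≤ C * Im l` one has `|l| ≤ (C + 1) * Im l` and
`Im l ≤ |l - t|`, so `F_l` is bounded by `C + 1` uniformly in `t`. For fixed `t`, `F_l(t) → 1` as
`l → ∞`. By bounded convergence the variance of `F_l` tends to that of the constant `1`.
-/

open Bornology Filter Topology

instance isCountablyGenerated_cobounded {E : Type*} [SeminormedAddGroup E] :
    (cobounded E).IsCountablyGenerated := by
  rw [← comap_norm_atTop]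
  infer_instance

lemma tendsto_mul_inv_sub_cobounded {𝕜 : Type*} [NormedDivisionRing 𝕜] (a : 𝕜) :
    Tendsto (fun z => z * (z - a)⁻¹) (cobounded 𝕜) (𝓝 1) := by
  have h_inv : Tendsto (fun z => (z - a)⁻¹) (cobounded 𝕜) (𝓝 0) :=
    tendsto_inv₀_cobounded.comp (tendsto_sub_const_cobounded a)
  have h_one_add : Tendsto (fun z => 1 + a * (z - a)⁻¹) (cobounded 𝕜) (𝓝 1) := by
    simpa using (h_inv.const_mul a).const_add 1
  refine h_one_add.congr' ?_
  filter_upwards [eventually_ne_cobounded a] with z hz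
  rw [← mul_inv_cancel₀ (sub_ne_zero.2 hz), ← add_mul, sub_add_cancel]

lemma tendsto_integral_norm_sub_integral_pow {ι Ω E : Type*} [MeasurableSpace Ω]
    [NormedAddCommGroup E] [NormedSpace ℝ E] {μ : Measure Ω} [IsFiniteMeasure μ] {l : Filter ι}
    [l.IsCountablyGenerated] {F : ι → Ω → E} {f : Ω → E} {B : ℝ}
    (hF_meas : ∀ᶠ i in l, AEStronglyMeasurable (F i) μ)
    (hF_bound : ∀ᶠ i in l, ∀ᵐ ω ∂μ, ‖F i ω‖ ≤ B)
    (hF_lim : ∀ᵐ ω ∂μ, Tendsto (F · ω) l (𝓝 (f ω))) (p : ℕ) :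
    Tendsto (fun i => ∫ ω, ‖F i ω - ∫ ω', F i ω' ∂μ‖ ^ p ∂μ) l
      (𝓝 (∫ ω, ‖f ω - ∫ ω', f ω' ∂μ‖ ^ p ∂μ)) := by
  have h_mean : Tendsto (fun i => ∫ ω, F i ω ∂μ) l (𝓝 (∫ ω, f ω ∂μ)) :=
    tendsto_integral_filter_of_norm_le_const hF_meas ⟨B, hF_bound⟩ hF_lim
  refine tendsto_integral_filter_of_norm_le_const ?_ ⟨(B + B * μ.real Set.univ) ^ p, ?_⟩ ?_
  · filter_upwards [hF_meas] with i hi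
    exact (hi.sub aestronglyMeasurable_const).norm.pow p
  · filter_upwards [hF_bound] with i hi
    filter_upwards [hi] with ω hω
    rw [norm_pow, norm_norm]
    gcongr
    exact norm_sub_le_of_le hω (norm_integral_le_of_norm_le_const hi)
  · filter_upwards [hF_lim] with ω hω
    exact (hω.sub h_mean).norm.pow p

/-- The Cauchy transform `G_μ(z) = ∫ (z - t)⁻¹ dμ(t)`, as a function on all of `ℂ`: for real `z`
the integrand need not be integrable, and then the value is the junk value `0`. -/
noncomputable def cauchyTransform (μ : Measure ℝ) (z : ℂ) : ℂ := ∫ t : ℝ, (z - (t : ℂ))⁻¹ ∂μ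

/-- The nontangential sector `|Re z| ≤ C * Im z` of the open upper half-plane. -/
def nontangentialSector (C : ℝ) : Set ℂ := {z | 0 < z.im ∧ |z.re| ≤ C * z.im}

/-- The filter expressing that `z → ∞` nontangentially, within the sector of aperture `C`. -/
noncomputable def nontangentialAtInfty (C : ℝ) : Filter ℂ :=
  cobounded ℂ ⊓ 𝓟 (nontangentialSector C)

instance isCountablyGenerated_nontangentialAtInfty (C : ℝ) :
    (nontangentialAtInfty C).IsCountablyGenerated :=
  inferInstanceAs (cobounded ℂ ⊓ 𝓟 (nontangentialSector C)).IsCountablyGenerated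

lemma nontangentialAtInfty_le_cobounded (C : ℝ) : nontangentialAtInfty C ≤ cobounded ℂ :=
  inf_le_left

lemma nontangentialSector_mem_nontangentialAtInfty (C : ℝ) :
    nontangentialSector C ∈ nontangentialAtInfty C :=
  mem_inf_of_right (mem_principal_self _)

lemma eventually_nontangentialAtInfty_iff {C : ℝ} {P : ℂ → Prop} :
    (∀ᶠ z in nontangentialAtInfty C, P z) ↔
      ∃ R > (0 : ℝ), ∀ z : ℂ, 0 < z.im → R < ‖z‖ → |z.re| ≤ C * z.im → P z := by
  have h_basis := ((atTop_basis_Ioi' (0 : ℝ)).comap (norm : ℂ → ℝ)).inf_principal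
    (nontangentialSector C)
  rw [comap_norm_atTop] at h_basis
  refine h_basis.eventually_iff.trans (exists_congr fun R => and_congr_right fun _ => ?_)
  exact ⟨fun h z him hR hre => h ⟨hR, him, hre⟩, fun h z ⟨hR, him, hre⟩ => h z him hR hre⟩

lemma norm_le_mul_im_of_mem_nontangentialSector {C : ℝ} {z : ℂ} (hz : z ∈ nontangentialSector C) :
    ‖z‖ ≤ (C + 1) * z.im := by
  obtain ⟨him, hre⟩ := hz
  calc ‖z‖ ≤ |z.re| + |z.im| := Complex.norm_le_abs_re_add_abs_im z
    _ ≤ C * z.im + z.im := by rw [abs_of_pos him]; gcongr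
    _ = (C + 1) * z.im := by ring

lemma norm_mul_inv_sub_ofReal_le {C : ℝ} {z : ℂ} (hz : z ∈ nontangentialSector C) (t : ℝ) :
    ‖z * (z - (t : ℂ))⁻¹‖ ≤ C + 1 := by
  have h_norm := norm_le_mul_im_of_mem_nontangentialSector hz
  have h_im : z.im ≤ ‖z - (t : ℂ)‖ := by simpa using Complex.im_le_norm (z - (t : ℂ))
  have hC : 0 ≤ C + 1 := nonneg_of_mul_nonneg_left ((norm_nonneg z).trans h_norm) hz.1
  rw [norm_mul, norm_inv, ← div_eq_mul_inv, div_le_iff₀ (hz.1.trans_le h_im)]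
  exact h_norm.trans (mul_le_mul_of_nonneg_left h_im hC)

lemma tendsto_norm_pow_mul_integral_inv_sub_cauchyTransform
    (μ : Measure ℝ) [IsProbabilityMeasure μ] (C : ℝ) {p : ℕ} (hp : p ≠ 0) :
    Tendsto (fun z : ℂ => ‖z‖ ^ p * ∫ t : ℝ, ‖(z - (t : ℂ))⁻¹ - cauchyTransform μ z‖ ^ p ∂μ)
      (nontangentialAtInfty C) (𝓝 0) := by
  have h_moment := tendsto_integral_norm_sub_integral_pow (μ := μ) (l := nontangentialAtInfty C)
    (F := fun (z : ℂ) (t : ℝ) => z * (z - (t : ℂ))⁻¹) (f := fun _ => 1) (B := C + 1)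
    (.of_forall fun z => by fun_prop)
    (by
      filter_upwards [nontangentialSector_mem_nontangentialAtInfty C] with z hz
      exact .of_forall (norm_mul_inv_sub_ofReal_le hz))
    (.of_forall fun t => (tendsto_mul_inv_sub_cobounded (t : ℂ)).mono_left
      (nontangentialAtInfty_le_cobounded C)) p
  have h_scale (z : ℂ) :
      ∫ t : ℝ, ‖z * (z - (t : ℂ))⁻¹ - ∫ s : ℝ, z * (z - (s : ℂ))⁻¹ ∂μ‖ ^ p ∂μ =
        ‖z‖ ^ p * ∫ t : ℝ, ‖(z - (t : ℂ))⁻¹ - cauchyTransform μ z‖ ^ p ∂μ := by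
    simp only [cauchyTransform, integral_const_mul, ← mul_sub, norm_mul, mul_pow]
  have h_const : ∫ _ : ℝ, ‖(1 : ℂ) - ∫ _ : ℝ, 1 ∂μ‖ ^ p ∂μ = 0 := by simp [hp]
  simpa only [h_scale, h_const] using h_moment

/-- For a Borel probability measure `μ` on `ℝ`,
`|λ|² · ∫ |(λ - t)⁻¹ - G_μ(λ)|² dμ(t) → 0` as `λ → ∞` nontangentially in the upper
half-plane, where `G_μ` is the Cauchy transform of `μ`. -/
theorem centered_resolvent_variance_nontangential_limit
    (μ : Measure ℝ) [IsProbabilityMeasure μ] :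
    ∀ C > (0:ℝ), ∀ ε > (0:ℝ), ∃ R > (0:ℝ), ∀ l : ℂ,
      0 < l.im → R < ‖l‖ → |l.re| ≤ C * l.im →
      ‖l‖^2 * (∫ t : ℝ, ‖(l - (t:ℂ))⁻¹ - ∫ s : ℝ, (l - (s:ℂ))⁻¹ ∂μ‖^2 ∂μ) < ε := by
  intro C _ ε hε
  have h_lim := tendsto_norm_pow_mul_integral_inv_sub_cauchyTransform μ C two_ne_zero
  exact eventually_nontangentialAtInfty_iff.1 (h_lim.eventually_lt_const hε)
end

section
/- Let μ be a Borel probability measure on ℝ₊ = [0, +∞) with μ ≠ δ₀, and let x ∈ ℝ ∖ {0} be such that 1/x ∉ supp(μ). Then the function ψ_μ, given on a neighborhood of x by ψ_μ(s) = ∫_{ℝ₊} st/(1 − st) dμ(t), is differentiable at x with ψ_μ′(x) = ∫_{ℝ₊} t/(1 − tx)² dμ(t), and this derivative is strictly positive. -/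
/-!
Since `x⁻¹` is not in the support, `|1 - x * t|` is at least some `c > 0` for almost every `t`.
So `x * t / (1 - x * t) = (1 - x * t)⁻¹ - 1` is bounded, that is, `|x * t|` is at most a constant
times `|1 - x * t|`. As `x ≠ 0`, replacing `x` by a nearby `s` therefore changes `1 - x * t` by at
most half its size, uniformly in `t`, and `|t| / (1 - s * t) ^ 2` is dominated by
`4 * |t| / (1 - x * t) ^ 2`. The latter is a bounded multiple of `|x * t / (1 - x * t)|`, hence
integrable, so one may differentiate under the integral sign. The resulting integrand is
nonnegative and vanishes only at `t = 0`, so its integral is positive unless `t = 0` almost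
everywhere.
-/

open MeasureTheory

/-- The topological support of a measure: the set of points all of whose neighborhoods
have positive measure. -/
def Measure.msupport {α : Type*} [TopologicalSpace α] {m : MeasurableSpace α}
    (μ : Measure α) : Set α :=
  {x | ∀ U ∈ nhds x, 0 < μ U}

open Filter Topology

lemma msupport_eq_support {α : Type*} [TopologicalSpace α] [MeasurableSpace α] (μ : Measure α) :
    Measure.msupport μ = μ.support :=
  Set.ext fun x => (μ.mem_support_iff_forall x).symm

lemma eq_dirac_of_ae_eq {α : Type*} [MeasurableSpace α] {μ : Measure α} [IsProbabilityMeasure μ]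
    {y : α} (h : ∀ᵐ t ∂μ, t = y) : μ = Measure.dirac y :=
  μ.map_id.symm.trans (ProbabilityTheory.hasLaw_dirac_of_ae_eq (X := id) h).map_eq

lemma exists_pos_ae_le_dist_of_notMem_support {α : Type*} [PseudoMetricSpace α]
    [MeasurableSpace α] {μ : Measure α} {y : α} (hy : y ∉ μ.support) :
    ∃ ε > 0, ∀ᵐ t ∂μ, ε ≤ dist t y := by
  obtain ⟨U, hU, hμU⟩ := Measure.notMem_support_iff_exists.1 hy
  obtain ⟨ε, hε, hball⟩ := Metric.mem_nhds_iff.1 hU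
  refine ⟨ε, hε, ?_⟩
  filter_upwards [measure_eq_zero_iff_ae_notMem.1 hμU] with t ht
  exact not_lt.1 fun hlt => ht (hball hlt)

section NormedField

variable {𝕜 : Type*} [NormedField 𝕜] {z : 𝕜} {c : ℝ}

lemma exists_pos_ae_le_norm_one_sub_mul [MeasurableSpace 𝕜] {μ : Measure 𝕜} (hz : z ≠ 0)
    (hzμ : z⁻¹ ∉ μ.support) : ∃ c > 0, ∀ᵐ t ∂μ, c ≤ ‖1 - z * t‖ := by
  obtain ⟨ε, hε, hdist⟩ := exists_pos_ae_le_dist_of_notMem_support hzμ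
  refine ⟨‖z‖ * ε, mul_pos (norm_pos_iff.2 hz) hε, ?_⟩
  filter_upwards [hdist] with t ht
  calc ‖z‖ * ε ≤ ‖z‖ * ‖z⁻¹ - t‖ := by rw [dist_comm, dist_eq_norm] at ht; gcongr
    _ = ‖1 - z * t‖ := by rw [← norm_mul, mul_sub, mul_inv_cancel₀ hz]

lemma norm_mul_div_one_sub_mul_le {w : 𝕜} (hc : 0 < c) (hw : c ≤ ‖1 - z * w‖) :
    ‖z * w / (1 - z * w)‖ ≤ c⁻¹ + 1 := by
  have hne : 1 - z * w ≠ 0 := norm_pos_iff.1 (hc.trans_le hw)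
  calc ‖z * w / (1 - z * w)‖ = ‖(1 - z * w)⁻¹ - 1‖ := by congr 1; field_simp; ring
    _ ≤ ‖(1 - z * w)⁻¹‖ + ‖(1 : 𝕜)‖ := norm_sub_le _ _
    _ ≤ c⁻¹ + 1 := by rw [norm_inv, norm_one]; gcongr

lemma eventually_norm_one_sub_mul_le (hz : z ≠ 0) (hc : 0 < c) :
    ∀ᶠ s in 𝓝 z, ∀ w, c ≤ ‖1 - z * w‖ → ‖1 - z * w‖ ≤ 2 * ‖1 - s * w‖ := by
  have hnear : ∀ᶠ s in 𝓝 z, ‖(s - z) / z‖ * (c⁻¹ + 1) < 1 / 2 := by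
    refine ContinuousAt.eventually_lt (by fun_prop) continuousAt_const ?_
    simp
  filter_upwards [hnear] with s hs w hw
  have hne : 1 - z * w ≠ 0 := norm_pos_iff.1 (hc.trans_le hw)
  have hchange : ‖(s - z) * w‖ ≤ 1 / 2 * ‖1 - z * w‖ :=
    calc ‖(s - z) * w‖ = ‖(s - z) / z‖ * ‖z * w / (1 - z * w)‖ * ‖1 - z * w‖ := by
          rw [← norm_mul, ← norm_mul]; congr 1; field_simp
      _ ≤ ‖(s - z) / z‖ * (c⁻¹ + 1) * ‖1 - z * w‖ := by
          gcongr; exact norm_mul_div_one_sub_mul_le hc hw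
      _ ≤ 1 / 2 * ‖1 - z * w‖ := by gcongr
  have htriangle : ‖1 - z * w‖ ≤ ‖1 - s * w‖ + ‖(s - z) * w‖ :=
    calc ‖1 - z * w‖ = ‖(1 - s * w) + (s - z) * w‖ := by congr 1; ring
      _ ≤ ‖1 - s * w‖ + ‖(s - z) * w‖ := norm_add_le _ _
  linarith

end NormedField

lemma hasDerivAt_mul_div_one_sub_mul {𝕜 : Type*} [NontriviallyNormedField 𝕜] {s w : 𝕜}
    (h : 1 - s * w ≠ 0) :
    HasDerivAt (fun s => s * w / (1 - s * w)) (w / (1 - s * w) ^ 2) s := by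
  have hmul : HasDerivAt (fun s => s * w) w s := hasDerivAt_mul_const w
  refine (hmul.fun_div (hmul.const_sub 1) h).congr_deriv ?_
  ring

section Integral

variable {α 𝕜 : Type*} [MeasurableSpace α] [RCLike 𝕜] {μ : Measure α} {f : α → 𝕜} {z : 𝕜} {c : ℝ}

lemma integrable_mul_div_one_sub_mul [IsFiniteMeasure μ] (hf : AEMeasurable f μ) (hc : 0 < c)
    (hbound : ∀ᵐ a ∂μ, c ≤ ‖1 - z * f a‖) :
    Integrable (fun a => z * f a / (1 - z * f a)) μ :=
  .of_bound (AEMeasurable.aestronglyMeasurable (by fun_prop)) (c⁻¹ + 1)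
    (hbound.mono fun _ => norm_mul_div_one_sub_mul_le hc)

lemma integrable_div_one_sub_mul_sq (hf : AEMeasurable f μ) (hz : z ≠ 0) (hc : 0 < c)
    (hbound : ∀ᵐ a ∂μ, c ≤ ‖1 - z * f a‖)
    (hint : Integrable (fun a => z * f a / (1 - z * f a)) μ) :
    Integrable (fun a => f a / (1 - z * f a) ^ 2) μ := by
  have hfactor : Integrable (fun a => (1 - z * f a)⁻¹ * (z * f a / (1 - z * f a))) μ := by
    refine hint.bdd_mul (c := c⁻¹) (AEMeasurable.aestronglyMeasurable (by fun_prop)) ?_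
    filter_upwards [hbound] with a ha
    rw [norm_inv]
    gcongr
  refine (hfactor.const_mul z⁻¹).congr (.of_forall fun a => ?_)
  field_simp

theorem hasDerivAt_integral_mul_div_one_sub_mul (hf : AEMeasurable f μ) (hz : z ≠ 0) (hc : 0 < c)
    (hbound : ∀ᵐ a ∂μ, c ≤ ‖1 - z * f a‖)
    (hint : Integrable (fun a => z * f a / (1 - z * f a)) μ) :
    HasDerivAt (fun s => ∫ a, s * f a / (1 - s * f a) ∂μ)
      (∫ a, f a / (1 - z * f a) ^ 2 ∂μ) z := by
  have hint' := integrable_div_one_sub_mul_sq hf hz hc hbound hint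
  refine (hasDerivAt_integral_of_dominated_loc_of_deriv_le
    (F' := fun s a => f a / (1 - s * f a) ^ 2)
    (bound := fun a => 4 * ‖f a / (1 - z * f a) ^ 2‖)
    (eventually_norm_one_sub_mul_le hz hc)
    (.of_forall fun s => AEMeasurable.aestronglyMeasurable (by fun_prop))
    hint hint'.aestronglyMeasurable ?_ (hint'.norm.const_mul 4) ?_).2
  · filter_upwards [hbound] with a ha s hs
    have hpos : 0 < ‖1 - z * f a‖ := hc.trans_le ha
    calc ‖f a / (1 - s * f a) ^ 2‖ = ‖f a‖ / ‖1 - s * f a‖ ^ 2 := by rw [norm_div, norm_pow]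
      _ ≤ ‖f a‖ / (‖1 - z * f a‖ / 2) ^ 2 := by gcongr; linarith [hs (f a) ha]
      _ = 4 * ‖f a / (1 - z * f a) ^ 2‖ := by rw [norm_div, norm_pow]; field_simp; norm_num
  · filter_upwards [hbound] with a ha s hs
    refine hasDerivAt_mul_div_one_sub_mul (norm_pos_iff.1 ?_)
    linarith [hs (f a) ha]

end Integral

lemma integral_div_one_sub_mul_sq_pos {α : Type*} [MeasurableSpace α] {μ : Measure α} {f : α → ℝ}
    {x : ℝ} (hf : 0 ≤ᵐ[μ] f) (hf0 : ¬ f =ᵐ[μ] 0) (hne : ∀ᵐ a ∂μ, 1 - x * f a ≠ 0)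
    (hint : Integrable (fun a => f a / (1 - x * f a) ^ 2) μ) :
    0 < ∫ a, f a / (1 - x * f a) ^ 2 ∂μ := by
  have hnonneg : 0 ≤ᵐ[μ] fun a => f a / (1 - x * f a) ^ 2 :=
    hf.mono fun a ha => div_nonneg ha (sq_nonneg _)
  refine (integral_nonneg_of_ae hnonneg).lt_of_ne' fun hzero => hf0 ?_
  filter_upwards [(integral_eq_zero_iff_of_nonneg_ae hnonneg hint).1 hzero, hne] with a ha hne
  exact (div_eq_zero_iff.1 ha).resolve_right (pow_ne_zero 2 hne)

theorem psi_deriv_pos_general {μ : Measure ℝ} {x : ℝ} (hpos : μ.support ⊆ Set.Ici 0)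
    (hnd : ¬ ∀ᵐ t ∂μ, t = 0) (hx : x ≠ 0) (hxs : x⁻¹ ∉ μ.support)
    (hint : Integrable (fun t => x * t / (1 - x * t)) μ) :
    HasDerivAt (fun s : ℝ => ∫ t, s * t / (1 - s * t) ∂μ)
      (∫ t, t / (1 - t * x) ^ 2 ∂μ) x ∧
    0 < ∫ t, t / (1 - t * x) ^ 2 ∂μ := by
  obtain ⟨c, hc, hbound⟩ := exists_pos_ae_le_norm_one_sub_mul hx hxs
  have hnonneg : ∀ᵐ t ∂μ, 0 ≤ t := mem_of_superset μ.support_mem_ae hpos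
  have hne : ∀ᵐ t ∂μ, 1 - x * t ≠ 0 := hbound.mono fun t ht => norm_pos_iff.1 (hc.trans_le ht)
  simp only [mul_comm _ x]
  exact ⟨hasDerivAt_integral_mul_div_one_sub_mul aemeasurable_id hx hc hbound hint,
    integral_div_one_sub_mul_sq_pos hnonneg hnd hne
      (integrable_div_one_sub_mul_sq aemeasurable_id hx hc hbound hint)⟩

/-- For a Borel probability measure `μ` on `ℝ₊` different from `δ₀` and `x ≠ 0` with
`1/x ∉ supp(μ)`, the function `ψ_μ(s) = ∫ st/(1-st) dμ(t)` is differentiable at `x` with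
`ψ_μ'(x) = ∫ t/(1-tx)² dμ(t) > 0`. -/
theorem psi_deriv_pos
    (μ : Measure ℝ) [IsProbabilityMeasure μ]
    (hpos : Measure.msupport μ ⊆ Set.Ici 0)
    (hnd : μ ≠ Measure.dirac 0)
    (x : ℝ) (hx : x ≠ 0) (hxs : x⁻¹ ∉ Measure.msupport μ) :
    HasDerivAt (fun s : ℝ => ∫ t, s * t / (1 - s * t) ∂μ)
      (∫ t, t / (1 - t * x)^2 ∂μ) x ∧
    0 < ∫ t, t / (1 - t * x)^2 ∂μ := by
  rw [msupport_eq_support] at hpos hxs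
  obtain ⟨c, hc, hbound⟩ := exists_pos_ae_le_norm_one_sub_mul hx hxs
  exact psi_deriv_pos_general hpos (mt eq_dirac_of_ae_eq hnd) hx hxs
    (integrable_mul_div_one_sub_mul aemeasurable_id hc hbound)
end

section
/- Let A be a unital algebra over ℂ, let y₁, y₂ ∈ A be such that 1 − y₁ and 1 − y₂ are invertible, and let β ∈ ℂ with β ≠ 0 and β ≠ 1. Then (1 − y₁) · [1 − (1/(β(β−1))) · ((1 − y₁)⁻¹ − β·1) · ((1 − y₂)⁻¹ − β·1)] · (1 − y₂) = (1/β) · (1 − (β/(β−1)) · y₁y₂). Consequently, 1 − (β/(β−1))·y₁y₂ is invertible if and only if 1 − (1/(β(β−1)))·((1 − y₁)⁻¹ − β·1)·((1 − y₂)⁻¹ − β·1) is invertible. -/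
/-! With `a = 1 - y₁` and `b = 1 - y₂`, the outer factors absorb the inverses, since
`a(a⁻¹ - β) = 1 - βa` and `(b⁻¹ - β)b = 1 - βb`. What remains is the polynomial identity
`β(β-1)ab - (1-βa)(1-βb) = (β-1) - β(1-a)(1-b)`, divided by `β(β-1)`. The bracket and
`1 - (β/(β-1))y₁y₂` thus differ by unit factors, so they are invertible together. -/

theorem isUnit_iff_of_mul_mul_eq_smul {G M : Type*} [GroupWithZero G] [Monoid M] [MulAction G M]
    [SMulCommClass G M M] [IsScalarTower G M M] {a b x y : M} {c : G} (ha : IsUnit a)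
    (hb : IsUnit b) (hc : c ≠ 0) (h : a * x * b = c • y) : IsUnit y ↔ IsUnit x := by
  calc IsUnit y
      ↔ IsUnit (c • y) := (isUnit_smul_iff (Units.mk0 c hc) y).symm
    _ ↔ IsUnit (a * x * b) := by rw [h]
    _ ↔ IsUnit x := by rw [hb.mul_right_iff, ha.mul_left_iff]

section

variable {R A : Type*} [CommSemiring R] [Ring A] [Algebra R A]

theorem mul_inverse_sub_smul_one {a : A} (ha : IsUnit a) (r : R) :
    a * (Ring.inverse a - r • (1 : A)) = 1 - r • a := by
  rw [mul_sub, Ring.mul_inverse_cancel a ha, mul_smul_one]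

theorem inverse_sub_smul_one_mul {a : A} (ha : IsUnit a) (r : R) :
    (Ring.inverse a - r • (1 : A)) * a = 1 - r • a := by
  rw [sub_mul, Ring.inverse_mul_cancel a ha, smul_one_mul]

theorem mul_one_sub_smul_mul_mul (c : R) (a u v b : A) :
    a * (1 - c • (u * v)) * b = a * b - c • ((a * u) * (v * b)) := by
  simp only [mul_sub, sub_mul, mul_one, mul_smul_comm, smul_mul_assoc, mul_assoc]

theorem mul_one_sub_smul_inverse_sub_mul_inverse_sub_mul {a b : A} (ha : IsUnit a)
    (hb : IsUnit b) (c r : R) :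
    a * (1 - c • ((Ring.inverse a - r • (1 : A)) * (Ring.inverse b - r • (1 : A)))) * b =
      a * b - c • ((1 - r • a) * (1 - r • b)) := by
  rw [mul_one_sub_smul_mul_mul, mul_inverse_sub_smul_one ha, inverse_sub_smul_one_mul hb]

end

theorem smul_mul_sub_one_sub_smul_mul_one_sub_smul {R A : Type*} [CommRing R] [Ring A]
    [Algebra R A] (r : R) (a b : A) :
    (r * (r - 1)) • (a * b) - (1 - r • a) * (1 - r • b) =
      (r - 1) • (1 : A) - r • ((1 - a) * (1 - b)) := by
  simp only [mul_sub, sub_mul, mul_one, one_mul, mul_smul_comm, smul_mul_assoc]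
  module

section

variable {K A : Type*} [Field K] [Ring A] [Algebra K A]

theorem mul_sub_inv_smul_one_sub_smul_mul_one_sub_smul {β : K} (hβ0 : β ≠ 0) (hβ1 : β ≠ 1)
    (a b : A) :
    a * b - (β * (β - 1))⁻¹ • ((1 - β • a) * (1 - β • b)) =
      β⁻¹ • (1 - (β / (β - 1)) • ((1 - a) * (1 - b))) := by
  have hβ1' : β - 1 ≠ 0 := sub_ne_zero.mpr hβ1
  calc a * b - (β * (β - 1))⁻¹ • ((1 - β • a) * (1 - β • b))
      = (β * (β - 1))⁻¹ • ((β * (β - 1)) • (a * b) - (1 - β • a) * (1 - β • b)) := by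
        rw [smul_sub, inv_smul_smul₀ (mul_ne_zero hβ0 hβ1')]
    _ = (β * (β - 1))⁻¹ • ((β - 1) • (1 : A) - β • ((1 - a) * (1 - b))) := by
        rw [smul_mul_sub_one_sub_smul_mul_one_sub_smul]
    _ = β⁻¹ • (1 - (β / (β - 1)) • ((1 - a) * (1 - b))) := by
        rw [mul_inv, mul_smul, smul_sub, inv_smul_smul₀ hβ1', smul_smul, inv_mul_eq_div]

theorem haagerup_multiplicative_identity_general (y₁ y₂ : A) (β : K) (hβ0 : β ≠ 0) (hβ1 : β ≠ 1)
    (h₁ : IsUnit (1 - y₁)) (h₂ : IsUnit (1 - y₂)) :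
    ((1 - y₁) *
        (1 - (β * (β - 1))⁻¹ •
          ((Ring.inverse (1 - y₁) - β • (1 : A)) * (Ring.inverse (1 - y₂) - β • (1 : A)))) *
        (1 - y₂)
      = β⁻¹ • (1 - (β / (β - 1)) • (y₁ * y₂))) ∧
    (IsUnit (1 - (β / (β - 1)) • (y₁ * y₂)) ↔
      IsUnit (1 - (β * (β - 1))⁻¹ •
        ((Ring.inverse (1 - y₁) - β • (1 : A)) * (Ring.inverse (1 - y₂) - β • (1 : A))))) := by
  have identity := mul_one_sub_smul_inverse_sub_mul_inverse_sub_mul h₁ h₂ (β * (β - 1))⁻¹ β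
  rw [mul_sub_inv_smul_one_sub_smul_mul_one_sub_smul hβ0 hβ1, sub_sub_cancel, sub_sub_cancel]
    at identity
  exact ⟨identity, isUnit_iff_of_mul_mul_eq_smul h₁ h₂ (inv_ne_zero hβ0) identity⟩

end

/-- Haagerup's multiplicative identity: if `1 - y₁` and `1 - y₂` are invertible in a unital
complex algebra and `β ∈ ℂ \ {0, 1}`, then
`(1-y₁)·[1 - (β(β-1))⁻¹((1-y₁)⁻¹ - β)((1-y₂)⁻¹ - β)]·(1-y₂) = β⁻¹(1 - (β/(β-1))y₁y₂)`;
consequently `1 - (β/(β-1))y₁y₂` is invertible iff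
`1 - (β(β-1))⁻¹((1-y₁)⁻¹ - β)((1-y₂)⁻¹ - β)` is invertible. -/
theorem haagerup_multiplicative_identity
    {A : Type*} [Ring A] [Algebra ℂ A] (y₁ y₂ : A) (β : ℂ)
    (hβ0 : β ≠ 0) (hβ1 : β ≠ 1)
    (h₁ : IsUnit (1 - y₁)) (h₂ : IsUnit (1 - y₂)) :
    ((1 - y₁) *
        (1 - (β * (β - 1))⁻¹ •
          ((Ring.inverse (1 - y₁) - β • (1 : A)) * (Ring.inverse (1 - y₂) - β • (1 : A)))) *
        (1 - y₂)
      = β⁻¹ • (1 - (β / (β - 1)) • (y₁ * y₂))) ∧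
    (IsUnit (1 - (β / (β - 1)) • (y₁ * y₂)) ↔
      IsUnit (1 - (β * (β - 1))⁻¹ •
        ((Ring.inverse (1 - y₁) - β • (1 : A)) * (Ring.inverse (1 - y₂) - β • (1 : A))))) :=
  haagerup_multiplicative_identity_general y₁ y₂ β hβ0 hβ1 h₁ h₂
end

section
/- Let μ be a Borel probability measure on the unit circle 𝕋 = {t ∈ ℂ : |t| = 1}, and let z ∈ 𝕋 be such that 1 − zt ≠ 0 for every t ∈ supp(μ). Set m₁ = ∫_𝕋 (1 − zt)⁻¹ dμ(t) and m₂ = ∫_𝕋 (1 − zt)⁻² dμ(t). Then ∫_𝕋 |(1 − zt)⁻¹ − m₁|² dμ(t) = |m₂ − m₁²|. -/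
/-!
Inversion maps the line `re = 1 / 2` onto the unit circle centred at `1`, so `g t = (1 - z * t)⁻¹`
has real part `1 / 2` on the support of `μ`, and hence so does its mean `m₁`. The deviation `g - m₁`
is therefore almost everywhere purely imaginary, that is `‖g - m₁‖ ^ 2 = -(g - m₁) ^ 2`, and the
integral of `(g - m₁) ^ 2` is `m₂ - m₁ ^ 2`.
-/

open MeasureTheory

lemma re_inv_one_sub_eq_half {w : ℂ} (hw : ‖w‖ = 1) (hw1 : w ≠ 1) : ((1 - w)⁻¹).re = 1 / 2 := by
  have normSq_eq : Complex.normSq (1 - w) = 2 * (1 - w.re) := by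
    rw [Complex.normSq_sub, map_one, one_mul, Complex.conj_re, Complex.normSq_eq_norm_sq, hw]
    ring
  have normSq_ne : Complex.normSq (1 - w) ≠ 0 :=
    Complex.normSq_eq_zero.not.mpr (sub_ne_zero.mpr hw1.symm)
  rw [Complex.inv_re, div_eq_iff normSq_ne, normSq_eq, Complex.sub_re, Complex.one_re]
  ring

lemma sq_eq_neg_norm_sq_of_re_eq_zero {w : ℂ} (hw : w.re = 0) :
    w ^ 2 = ((-‖w‖ ^ 2 : ℝ) : ℂ) := by
  have conj_eq : (starRingEnd ℂ) w = -w := Complex.ext (by simp [hw]) (by simp)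
  push_cast
  rw [← Complex.mul_conj', conj_eq]
  ring

section Variance

variable {Ω : Type*} {mΩ : MeasurableSpace Ω} {μ : Measure Ω}

lemma norm_integral_sq_of_re_ae_eq_zero {f : Ω → ℂ} (hf : ∀ᵐ x ∂μ, (f x).re = 0) :
    ‖∫ x, f x ^ 2 ∂μ‖ = ∫ x, ‖f x‖ ^ 2 ∂μ := by
  have sq_ae_eq : ∀ᵐ x ∂μ, f x ^ 2 = ((-‖f x‖ ^ 2 : ℝ) : ℂ) :=
    hf.mono fun _ ↦ sq_eq_neg_norm_sq_of_re_eq_zero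
  have norm_sq_nonneg : 0 ≤ ∫ x, ‖f x‖ ^ 2 ∂μ := integral_nonneg fun _ ↦ sq_nonneg _
  rw [integral_congr_ae sq_ae_eq, integral_complex_ofReal, integral_neg, Complex.norm_real,
    norm_neg, Real.norm_of_nonneg norm_sq_nonneg]

variable [IsProbabilityMeasure μ]

lemma re_integral_of_re_ae_eq_const {𝕜 : Type*} [RCLike 𝕜] {f : Ω → 𝕜} {c : ℝ}
    (hf : Integrable f μ) (hre : ∀ᵐ x ∂μ, RCLike.re (f x) = c) :
    RCLike.re (∫ x, f x ∂μ) = c := by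
  rw [← integral_re hf, integral_congr_ae hre, integral_const, probReal_univ, one_smul]

lemma integral_sub_integral_sq {𝕜 : Type*} [RCLike 𝕜] {f : Ω → 𝕜} (hf : MemLp f 2 μ) :
    ∫ x, (f x - ∫ y, f y ∂μ) ^ 2 ∂μ = ∫ x, f x ^ 2 ∂μ - (∫ x, f x ∂μ) ^ 2 := by
  set m := ∫ x, f x ∂μ with hm
  have hf_mul : Integrable (fun x ↦ 2 * m * f x) μ := (hf.integrable one_le_two).const_mul _
  have hf_sq : Integrable (fun x ↦ f x ^ 2) μ := by
    simp only [sq]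
    exact hf.integrable_mul hf
  have hf_sub : Integrable (fun x ↦ f x ^ 2 - 2 * m * f x) μ := hf_sq.sub hf_mul
  calc ∫ x, (f x - m) ^ 2 ∂μ
      = ∫ x, (f x ^ 2 - 2 * m * f x + m ^ 2) ∂μ := by congr with x; ring
    _ = ∫ x, f x ^ 2 ∂μ - 2 * m * m + m ^ 2 := by
      rw [integral_add hf_sub (integrable_const _), integral_sub hf_sq hf_mul,
        integral_const_mul, ← hm, integral_const, probReal_univ, one_smul]
    _ = ∫ x, f x ^ 2 ∂μ - m ^ 2 := by ring

lemma integral_norm_sub_integral_sq_of_re_ae_eq_const {f : Ω → ℂ} {c : ℝ} (hf : MemLp f 2 μ)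
    (hre : ∀ᵐ x ∂μ, (f x).re = c) :
    ∫ x, ‖f x - ∫ y, f y ∂μ‖ ^ 2 ∂μ = ‖∫ x, f x ^ 2 ∂μ - (∫ x, f x ∂μ) ^ 2‖ := by
  have re_mean : (∫ x, f x ∂μ).re = c :=
    re_integral_of_re_ae_eq_const (hf.integrable one_le_two) hre
  have re_deviation : ∀ᵐ x ∂μ, (f x - ∫ y, f y ∂μ).re = 0 :=
    hre.mono fun x hx ↦ by rw [Complex.sub_re, hx, re_mean, sub_self]
  rw [← norm_integral_sq_of_re_ae_eq_zero re_deviation, integral_sub_integral_sq hf]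

theorem circle_variance_eq_abs_general {w : Ω → ℂ} (hw : ∀ᵐ x ∂μ, ‖w x‖ = 1)
    (hw1 : ∀ᵐ x ∂μ, w x ≠ 1) (hL2 : MemLp (fun x ↦ (1 - w x)⁻¹) 2 μ) :
    ∫ x, ‖(1 - w x)⁻¹ - ∫ y, (1 - w y)⁻¹ ∂μ‖ ^ 2 ∂μ =
      ‖(∫ x, ((1 - w x) ^ 2)⁻¹ ∂μ) - (∫ x, (1 - w x)⁻¹ ∂μ) ^ 2‖ := by
  have re_eq_half : ∀ᵐ x ∂μ, ((1 - w x)⁻¹).re = 1 / 2 := by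
    filter_upwards [hw, hw1] with x using re_inv_one_sub_eq_half
  simpa only [inv_pow] using integral_norm_sub_integral_sq_of_re_ae_eq_const hL2 re_eq_half

end Variance

section Support

variable {X : Type*} [TopologicalSpace X] [MeasurableSpace X] {μ : Measure X}

lemma msupport_eq_support_s19 : Measure.msupport μ = μ.support :=
  Set.ext fun x ↦ (Measure.mem_support_iff_forall x).symm

lemma isClosed_msupport : IsClosed (Measure.msupport μ) :=
  msupport_eq_support_s19 (μ := μ) ▸ Measure.isClosed_support

lemma msupport_mem_ae [HereditarilyLindelofSpace X] : Measure.msupport μ ∈ ae μ :=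
  msupport_eq_support_s19 (μ := μ) ▸ Measure.support_mem_ae

lemma ae_of_forall_mem_msupport [HereditarilyLindelofSpace X] {p : X → Prop}
    (hp : ∀ x ∈ Measure.msupport μ, p x) : ∀ᵐ x ∂μ, p x :=
  Filter.mem_of_superset msupport_mem_ae hp

lemma memLp_of_continuousOn_of_isCompact_mem_ae [OpensMeasurableSpace X] [IsFiniteMeasure μ]
    {E : Type*} [NormedAddCommGroup E] {f : X → E} {K : Set X} (hK : IsCompact K)
    (hK_meas : MeasurableSet K) (hK_ae : K ∈ ae μ) (hf : ContinuousOn f K) (p : ENNReal) :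
    MemLp f p μ := by
  obtain ⟨C, hC⟩ := hK.exists_bound_of_continuousOn hf
  have f_meas : AEStronglyMeasurable f μ := by
    simpa only [Measure.restrict_eq_self_of_ae_mem hK_ae] using
      hf.aestronglyMeasurable_of_isCompact (μ := μ) hK hK_meas
  exact .of_bound f_meas C (Filter.mem_of_superset hK_ae hC)

end Support

/-- For a Borel probability measure `μ` on the unit circle and `z` on the unit circle with
`1 - zt ≠ 0` for all `t ∈ supp(μ)`: with `m₁ = ∫ (1-zt)⁻¹ dμ(t)` and `m₂ = ∫ (1-zt)⁻² dμ(t)`,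
the variance `∫ |(1-zt)⁻¹ - m₁|² dμ(t)` equals `|m₂ - m₁²|`. -/
theorem circle_variance_eq_abs
    (μ : Measure ℂ) [IsProbabilityMeasure μ]
    (hsupp : Measure.msupport μ ⊆ Metric.sphere (0 : ℂ) 1)
    (z : ℂ) (hz : ‖z‖ = 1)
    (h : ∀ t ∈ Measure.msupport μ, 1 - z * t ≠ 0) :
    ∫ t, ‖(1 - z * t)⁻¹ - ∫ s, (1 - z * s)⁻¹ ∂μ‖^2 ∂μ =
      ‖(∫ t, ((1 - z * t)^2)⁻¹ ∂μ) - (∫ t, (1 - z * t)⁻¹ ∂μ)^2‖ := by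
  have isCompact_msupport : IsCompact (Measure.msupport μ) :=
    (isCompact_sphere 0 1).of_isClosed_subset isClosed_msupport hsupp
  exact circle_variance_eq_abs_general
    (ae_of_forall_mem_msupport fun t ht ↦ by
      rw [norm_mul, hz, one_mul, mem_sphere_zero_iff_norm.mp (hsupp ht)])
    (ae_of_forall_mem_msupport fun t ht ↦ (sub_ne_zero.mp (h t ht)).symm)
    (memLp_of_continuousOn_of_isCompact_mem_ae isCompact_msupport isClosed_msupport.measurableSet
      msupport_mem_ae (ContinuousOn.inv₀ (by fun_prop) h) 2)
end
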